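/- Let n ≥ 1 and k ≥ 1 be integers. For every f ∈ P_{n,2k} define the quadratic form H_f on P_{n,k} by H_f(g) = ⟨f, g²⟩. Then max{ |H_f(g)| : g ∈ P_{n,k}, ⟨g,g⟩ = 1 } ≤ 2√3 · (∫_{S_{P_{n,k}}} H_f(g)^{2 D_{n,k}} dν(g))^{1/(2 D_{n,k})}, where D_{n,k} = dim P_{n,k}, S_{P_{n,k}} is the unit sphere of P_{n,k}, and ν is the rotation-invariant probability measure on S_{P_{n,k}}. -/

import Mathlib

/-!
Barvinok's argument. In the coordinates `ψ` the function `H_f` is a quadratic form on `ℝ^D`, so its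
`D`-th power lies in the space `W` of forms of degree `2D` in `D` variables, which is
finite-dimensional and stable under rotations. For any such space the reproducing kernel of the
`L²(ν)` inner product is constant on the diagonal over the sphere, because rotations act
transitively there, and its average over the sphere is at most `dim W`. Hence
`p(y)² ≤ dim W · ∫ p² dν` for every `p ∈ W` and every unit vector `y`
(`IsRotInvSphereProb.sq_le_finrank_mul`).

The dimension of `W` is `(3D-1 choose 2D) ≤ 2^{3D} ≤ 12^D`, so taking `p = H_f ^ D` gives
`|H_f(y)|^{2D} ≤ (2√3)^{2D} ∫ H_f^{2D} dν`, and `2D`-th roots finish the proof.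
-/


open MeasureTheory MvPolynomial
open scoped ENNReal RealInnerProductSpace

noncomputable section

/-- Evaluation of a multivariate polynomial at a point of Euclidean space `ℝⁿ`. -/
def peval {n : ℕ} (p : MvPolynomial (Fin n) ℝ) (x : EuclideanSpace ℝ (Fin n)) : ℝ :=
  MvPolynomial.eval (fun i => x i) p

/-- The `L²(σ)` inner product `⟨f,g⟩ = ∫ f·g dσ` on polynomials. -/
def pinner {n : ℕ} (σ : Measure (EuclideanSpace ℝ (Fin n)))
    (f g : MvPolynomial (Fin n) ℝ) : ℝ :=
  ∫ x, peval f x * peval g x ∂σ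

/-- `μ` is a rotation-invariant probability measure concentrated on the unit sphere. -/
def IsRotInvSphereProb {E : Type*} [NormedAddCommGroup E] [NormedSpace ℝ E]
    [MeasurableSpace E] (μ : Measure E) : Prop :=
  IsProbabilityMeasure μ ∧ μ (Metric.sphere (0 : E) 1)ᶜ = 0 ∧
    ∀ T : E ≃ₗᵢ[ℝ] E, Measure.map T μ = μ

/-- The hyperplane `M` of forms of degree `2k` with integral `0` on the sphere. -/
def Mset (n k : ℕ) (σ : Measure (EuclideanSpace ℝ (Fin n))) :
    Set (MvPolynomial (Fin n) ℝ) :=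
  {f | f.IsHomogeneous (2 * k) ∧ ∫ x, peval f x ∂σ = 0}

/-- The form `r^{2k} = (x₁² + ⋯ + xₙ²)^k`. -/
def rSq (n k : ℕ) : MvPolynomial (Fin n) ℝ :=
  (∑ i : Fin n, X i ^ 2) ^ k

/-- The cone `C` of nonnegative forms of degree `2k`. -/
def Cset (n k : ℕ) : Set (MvPolynomial (Fin n) ℝ) :=
  {f | f.IsHomogeneous (2 * k) ∧ ∀ x : EuclideanSpace ℝ (Fin n), 0 ≤ peval f x}

/-- The cone `Sq` of sums of squares of forms of degree `k`. -/
def Sqset (n k : ℕ) : Set (MvPolynomial (Fin n) ℝ) :=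
  {f | ∃ (m : ℕ) (g : Fin m → MvPolynomial (Fin n) ℝ),
    (∀ i, (g i).IsHomogeneous k) ∧ f = ∑ i, g i ^ 2}

/-- The compact base `C̃ = {f ∈ M : f + r^{2k} ∈ C}`. -/
def Ctilde (n k : ℕ) (σ : Measure (EuclideanSpace ℝ (Fin n))) :
    Set (MvPolynomial (Fin n) ℝ) :=
  {f ∈ Mset n k σ | f + rSq n k ∈ Cset n k}

/-- The compact base `S̃q = {f ∈ M : f + r^{2k} ∈ Sq}`. -/
def Sqtilde (n k : ℕ) (σ : Measure (EuclideanSpace ℝ (Fin n))) :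
    Set (MvPolynomial (Fin n) ℝ) :=
  {f ∈ Mset n k σ | f + rSq n k ∈ Sqset n k}

/-- `φ` is a linear isometry (w.r.t. the `L²(σ)` inner product) identifying Euclidean
`D`-space with the hyperplane `M`; in particular `D = D_M = dim M`. -/
def IsCoordOfM (n k D : ℕ) (σ : Measure (EuclideanSpace ℝ (Fin n)))
    (φ : EuclideanSpace ℝ (Fin D) →ₗ[ℝ] MvPolynomial (Fin n) ℝ) : Prop :=
  Function.Injective φ ∧ Set.range φ = Mset n k σ ∧
    ∀ y z : EuclideanSpace ℝ (Fin D), pinner σ (φ y) (φ z) = ⟪y, z⟫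

/-- The `L^∞` norm of a polynomial on the unit sphere `S^{n-1}`. -/
def supNorm {n : ℕ} (f : MvPolynomial (Fin n) ℝ) : ℝ :=
  sSup ((fun x => |peval f x|) '' Metric.sphere (0 : EuclideanSpace ℝ (Fin n)) 1)

/-- The norm `‖f‖_sq = max {|⟨f, g²⟩| : g ∈ P_{n,k}, ⟨g,g⟩ = 1}`. -/
def sqNorm {n : ℕ} (k : ℕ) (σ : Measure (EuclideanSpace ℝ (Fin n)))
    (f : MvPolynomial (Fin n) ℝ) : ℝ :=
  sSup ((fun g => |pinner σ f (g ^ 2)|) ''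
    {g : MvPolynomial (Fin n) ℝ | g.IsHomogeneous k ∧ pinner σ g g = 1})

/-! ### Rotation-invariant measures on the sphere -/

section Sphere

set_option linter.unusedSectionVars false

variable {E : Type*} [NormedAddCommGroup E] [InnerProductSpace ℝ E] [FiniteDimensional ℝ E]
  [MeasurableSpace E] [BorelSpace E]

theorem IsRotInvSphereProb.ae_norm {ν : Measure E} (hν : IsRotInvSphereProb ν) :
    ∀ᵐ x ∂ν, ‖x‖ = 1 := by
  have h := hν.2.1
  filter_upwards [compl_mem_ae_iff.2 h] with x hx
  simpa using hx

theorem IsRotInvSphereProb.integrable {ν : Measure E} (hν : IsRotInvSphereProb ν)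
    {g : E → ℝ} (hg : Continuous g) : Integrable g ν := by
  have := hν.1
  have : ProperSpace E := FiniteDimensional.proper ℝ E
  obtain ⟨C, hC⟩ := (isCompact_sphere (0 : E) 1).exists_bound_of_continuousOn hg.continuousOn
  refine Integrable.of_bound hg.aestronglyMeasurable C ?_
  filter_upwards [hν.ae_norm] with x hx
  exact hC x (by simpa using hx)

/-- The isometry group acts transitively on the unit sphere. -/
theorem exists_isometry_map {y z : E} (hy : ‖y‖ = 1) (hz : ‖z‖ = 1) :
    ∃ T : E ≃ₗᵢ[ℝ] E, T y = z :=
  ⟨_, Submodule.reflection_sub (hy.trans hz.symm)⟩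

theorem IsRotInvSphereProb.integral_comp {ν : Measure E} (hν : IsRotInvSphereProb ν)
    {g : E → ℝ} (hg : Continuous g) (T : E ≃ₗᵢ[ℝ] E) :
    ∫ x, g (T x) ∂ν = ∫ x, g x ∂ν := by
  conv_rhs => rw [← hν.2.2 T]
  rw [integral_map T.continuous.aemeasurable hg.aestronglyMeasurable]

/-- An invariant measure charges every relatively open subset of the sphere: otherwise, by
transitivity, every point of the sphere would have a null neighbourhood. -/
theorem IsRotInvSphereProb.eq_zero_of_integral_sq {ν : Measure E} (hν : IsRotInvSphereProb ν)
    {g : E → ℝ} (hg : Continuous g) (h : ∫ x, g x * g x ∂ν = 0) {y : E} (hy : ‖y‖ = 1) :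
    g y = 0 := by
  have := hν.1
  by_contra hgy
  have h0 : ν {x | g x ≠ 0} = 0 := by
    have := (integral_eq_zero_iff_of_nonneg (fun x => mul_self_nonneg (g x))
      (hν.integrable (hg.mul hg))).1 h
    rw [← nonpos_iff_eq_zero]
    refine (measure_mono ?_).trans (ae_iff.1 this).le
    intro x hx
    simpa using hx
  have hopen : IsOpen {x | g x ≠ 0} := isOpen_ne_fun hg continuous_const
  have hs : ν (Metric.sphere (0 : E) 1) = 0 := by
    refine measure_null_of_locally_null _ fun x hx => ?_
    obtain ⟨T, hT⟩ := exists_isometry_map (show ‖x‖ = 1 by simpa using hx) hy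
    refine ⟨T ⁻¹' {x | g x ≠ 0}, mem_nhdsWithin_of_mem_nhds
      ((hopen.preimage T.continuous).mem_nhds (by simpa [hT] using hgy)), ?_⟩
    rw [← Measure.map_apply T.continuous.measurable hopen.measurableSet, hν.2.2 T, h0]
  have h1 : ν Set.univ = 0 := by
    rw [← Set.union_compl_self (Metric.sphere (0 : E) 1)]
    exact measure_union_null hs hν.2.1
  simp at h1

/-- **Reproducing kernel bound.** On an isometry-invariant finite-dimensional space of continuous
functions, point evaluation at a unit vector has squared `L²` norm at most the dimension.

The kernel on the diagonal is `K y = ∑ i, (v i y)² / ‖v i‖²` for an orthogonal basis `v`. Basis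
vectors of norm zero are allowed: they vanish on the sphere and contribute `0` because `0 / 0 = 0`,
so `W` need not embed into functions on the sphere. -/
theorem IsRotInvSphereProb.sq_le_finrank_mul {ν : Measure E} (hν : IsRotInvSphereProb ν)
    {W : Type*} [AddCommGroup W] [Module ℝ W] [FiniteDimensional ℝ W]
    (ev : W →ₗ[ℝ] (E → ℝ)) (hc : ∀ w, Continuous (ev w))
    (hinv : ∀ (T : E ≃ₗᵢ[ℝ] E) (w : W), ∃ w', ∀ x, ev w' x = ev w (T x))
    (w : W) {y : E} (hy : ‖y‖ = 1) :
    (ev w y) ^ 2 ≤ Module.finrank ℝ W * ∫ x, ev w x * ev w x ∂ν := by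
  have hint : ∀ u v : W, Integrable (fun x => ev u x * ev v x) ν :=
    fun u v => hν.integrable ((hc u).mul (hc v))
  let B : LinearMap.BilinForm ℝ W := LinearMap.mk₂ ℝ (fun u v => ∫ x, ev u x * ev v x ∂ν)
    (fun u u' v => by
      rw [← integral_add (hint _ _) (hint _ _)]; congr 1; ext x; simp [add_mul])
    (fun c u v => by
      rw [smul_eq_mul, ← integral_const_mul]; congr 1; ext x; simp [mul_assoc])
    (fun u v v' => by
      rw [← integral_add (hint _ _) (hint _ _)]; congr 1; ext x; simp [mul_add])
    (fun c u v => by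
      rw [smul_eq_mul, ← integral_const_mul]; congr 1; ext x; simp [mul_left_comm])
  have hB : ∀ u v, B u v = ∫ x, ev u x * ev v x ∂ν := fun u v => rfl
  have hsymm : LinearMap.IsSymm B := ⟨fun u v => by simp [hB, mul_comm]⟩
  have : Invertible (2 : ℝ) := invertibleOfNonzero two_ne_zero
  obtain ⟨v, hv⟩ := LinearMap.BilinForm.exists_orthogonal_basis hsymm
  have hv' : ∀ i j, i ≠ j → B (v i) (v j) = 0 := fun i j hij => hv hij
  have hb0 : ∀ i, 0 ≤ B (v i) (v i) := fun i => integral_nonneg fun x => mul_self_nonneg _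
  have hvan : ∀ i, B (v i) (v i) = 0 → ∀ {z : E}, ‖z‖ = 1 → ev (v i) z = 0 :=
    fun i hi z hz => hν.eq_zero_of_integral_sq (hc _) hi hz
  have hBsum : ∀ c : Fin (Module.finrank ℝ W) → ℝ,
      B (∑ i, c i • v i) (∑ i, c i • v i) = ∑ i, c i ^ 2 * B (v i) (v i) := by
    intro c
    simp only [map_sum, LinearMap.sum_apply, map_smul, LinearMap.smul_apply, smul_eq_mul]
    refine Finset.sum_congr rfl fun i _ => ?_
    rw [Finset.sum_eq_single i]
    · ring
    · intro j _ hj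
      simp [hv' j i hj]
    · simp
  let K : E → ℝ := fun z => ∑ i, (ev (v i) z) ^ 2 / B (v i) (v i)
  have hK0 : ∀ z, 0 ≤ K z := fun z => Finset.sum_nonneg fun i _ => div_nonneg (sq_nonneg _) (hb0 i)
  have hKcont : Continuous K :=
    continuous_finsetSum _ fun i _ => ((hc _).pow 2).div_const _
  have hCS : ∀ (p : W) {z : E}, ‖z‖ = 1 → (ev p z) ^ 2 ≤ B p p * K z := by
    intro p z hz
    obtain ⟨c, rfl⟩ : ∃ c : Fin (Module.finrank ℝ W) → ℝ, ∑ i, c i • v i = p :=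
      ⟨fun i => v.repr p i, v.sum_repr p⟩
    rw [hBsum]
    have : ev (∑ i, c i • v i) z = ∑ i, c i * ev (v i) z := by
      simp [map_sum, Finset.sum_apply]
    rw [this]
    refine Finset.sum_sq_le_sum_mul_sum_of_sq_le_mul _
      (fun i _ => mul_nonneg (sq_nonneg _) (hb0 i))
      (fun i _ => div_nonneg (sq_nonneg _) (hb0 i)) fun i _ => le_of_eq ?_
    by_cases hi : B (v i) (v i) = 0
    · simp [hvan i hi hz]
    · field_simp
  -- `K` is invariant: test the bound at `T z` on the translate of the reproducing vector at `z`.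
  have hKle : ∀ {z z' : E}, ‖z‖ = 1 → ‖z'‖ = 1 → K z ≤ K z' := by
    intro z z' hz hz'
    obtain ⟨T, hT⟩ := exists_isometry_map hz' hz
    let p : W := ∑ i, (ev (v i) z / B (v i) (v i)) • v i
    have hpz : ev p z = K z := by
      simp only [p, K, map_sum, Finset.sum_apply, map_smul, Pi.smul_apply, smul_eq_mul]
      exact Finset.sum_congr rfl fun i _ => by ring
    have hpp : B p p = K z := by
      rw [hBsum]
      refine Finset.sum_congr rfl fun i _ => ?_
      by_cases hi : B (v i) (v i) = 0
      · simp [hi]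
      · field_simp
    obtain ⟨q, hq⟩ := hinv T p
    have hqq : B q q = B p p := by
      rw [hB, hB]
      simp only [hq]
      exact hν.integral_comp ((hc p).mul (hc p)) T
    have h := hCS q hz'
    rw [hq, hT, hpz, hqq, hpp] at h
    rcases (hK0 z).eq_or_lt with h0 | h0
    · rw [← h0]; exact hK0 z'
    · nlinarith
  have hKint : ∫ z, K z ∂ν ≤ Module.finrank ℝ W := by
    have hi : ∀ i ∈ Finset.univ, Integrable (fun z => (ev (v i) z) ^ 2 / B (v i) (v i)) ν :=
      fun i _ => hν.integrable (((hc _).pow 2).div_const _)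
    simp only [K]
    rw [integral_finsetSum _ hi]
    calc _ ≤ ∑ i : Fin (Module.finrank ℝ W), (1 : ℝ) := Finset.sum_le_sum fun i _ => by
            rw [integral_div]
            simp only [pow_two, ← hB]
            exact div_self_le_one _
      _ = _ := by simp
  have hKy : K y ≤ Module.finrank ℝ W := by
    have := hν.1
    refine le_trans ?_ hKint
    calc K y = ∫ _, K y ∂ν := by simp
      _ ≤ ∫ z, K z ∂ν := by
        refine integral_mono_ae (integrable_const _) (hν.integrable hKcont) ?_
        filter_upwards [hν.ae_norm] with z hz
        exact hKle hy hz
  calc (ev w y) ^ 2 ≤ B w w * K y := hCS w hy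
    _ ≤ B w w * Module.finrank ℝ W :=
      mul_le_mul_of_nonneg_left hKy (integral_nonneg fun x => mul_self_nonneg _)
    _ = _ := by rw [mul_comm, hB]

end Sphere

/-! ### Forms on Euclidean space -/

theorem continuous_peval {n : ℕ} (p : MvPolynomial (Fin n) ℝ) : Continuous (peval p) := by
  unfold peval
  exact (MvPolynomial.continuous_eval p).comp (by fun_prop)

theorem finrank_homogeneousSubmodule (D m : ℕ) :
    Module.finrank ℝ (homogeneousSubmodule (Fin D) ℝ m) = (D + m - 1).choose m := by
  classical
  have hset : {d : Fin D →₀ ℕ | d.degree = m} =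
      ((Finset.univ : Finset (Fin D)).finsuppAntidiag m : Set (Fin D →₀ ℕ)) := by
    ext d
    simp [Finsupp.degree_eq_sum]
  rw [homogeneousSubmodule_eq_finsupp_supported, hset,
    (AddMonoidAlgebra.supportedEquivFinsupp _).finrank_eq]
  rw [Module.finrank_finsupp_self]
  simp [Finset.card_finsuppAntidiag_nat_eq_choose]

/-- A crude form of Barvinok's dimension count `(3D-1 choose 2D) ≤ 12 ^ D`. -/
theorem finrank_homogeneousSubmodule_le (D : ℕ) :
    (Module.finrank ℝ (homogeneousSubmodule (Fin D) ℝ (2 * D)) : ℝ) ≤ 12 ^ D := by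
  rw [finrank_homogeneousSubmodule]
  have h : (D + 2 * D - 1).choose (2 * D) ≤ 12 ^ D :=
    calc _ ≤ 2 ^ (D + 2 * D - 1) := Nat.choose_le_two_pow _ _
      _ ≤ 2 ^ (3 * D) := Nat.pow_le_pow_right (by norm_num) (by omega)
      _ = 8 ^ D := by rw [pow_mul]; norm_num
      _ ≤ 12 ^ D := Nat.pow_le_pow_left (by norm_num) _
  exact_mod_cast h

theorem exists_homogeneous_comp_isometry {D m : ℕ} {p : MvPolynomial (Fin D) ℝ}
    (hp : p.IsHomogeneous m) (T : EuclideanSpace ℝ (Fin D) ≃ₗᵢ[ℝ] EuclideanSpace ℝ (Fin D)) :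
    ∃ q : MvPolynomial (Fin D) ℝ, q.IsHomogeneous m ∧ ∀ x, peval q x = peval p (T x) := by
  let g : Fin D → MvPolynomial (Fin D) ℝ := fun i =>
    ∑ j, C (T (EuclideanSpace.single j 1) i) * X j
  refine ⟨aeval g p, ?_, fun x => ?_⟩
  · simpa using hp.aeval g fun i => IsHomogeneous.sum _ _ _ fun j _ => isHomogeneous_C_mul_X _ _
  · have hx : ∀ i, T x i = ∑ j, T (EuclideanSpace.single j 1) i * x j := by
      intro i
      have : x = ∑ j, x j • EuclideanSpace.single j (1 : ℝ) := by
        simpa using ((EuclideanSpace.basisFun (Fin D) ℝ).sum_repr x).symm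
      conv_lhs => rw [this]
      simp [map_sum, mul_comm]
    have hcomp : (MvPolynomial.aeval (R := ℝ) (fun i => x i)).comp (aeval g) =
        MvPolynomial.aeval (R := ℝ) (fun i => T x i) := by
      ext i
      simp [g, hx]
    have := DFunLike.congr_fun hcomp p
    simpa [peval, MvPolynomial.aeval_eq_eval] using this

/-- A form of degree `2D` in `D` variables is bounded on the unit sphere by `√(12 ^ D)` times its
`L²` norm. -/
theorem sq_peval_le {D : ℕ} {ν : Measure (EuclideanSpace ℝ (Fin D))}
    (hν : IsRotInvSphereProb ν) {p : MvPolynomial (Fin D) ℝ} (hp : p.IsHomogeneous (2 * D))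
    {y : EuclideanSpace ℝ (Fin D)} (hy : ‖y‖ = 1) :
    peval p y ^ 2 ≤ 12 ^ D * ∫ x, peval p x * peval p x ∂ν := by
  let W := homogeneousSubmodule (Fin D) ℝ (2 * D)
  have : FiniteDimensional ℝ W := Module.Finite.iff_fg.2 (homogeneousSubmodule_fg _ _ _)
  let ev : W →ₗ[ℝ] (EuclideanSpace ℝ (Fin D) → ℝ) :=
    { toFun := fun w => peval w.1
      map_add' := fun u v => by ext x; simp [peval]
      map_smul' := fun c u => by ext x; simp [peval] }
  refine (hν.sq_le_finrank_mul ev (fun w => continuous_peval w.1) ?_ ⟨p, hp⟩ hy).trans ?_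
  · intro T w
    obtain ⟨q, hq, h⟩ := exists_homogeneous_comp_isometry w.2 T
    exact ⟨⟨q, hq⟩, h⟩
  · exact mul_le_mul_of_nonneg_right (finrank_homogeneousSubmodule_le D)
      (integral_nonneg fun x => mul_self_nonneg _)

/-- In the coordinates `ψ`, the map `y ↦ H_f (ψ y)` is a quadratic form in `y`. -/
theorem exists_quadratic {n D : ℕ} {σ : Measure (EuclideanSpace ℝ (Fin n))}
    (hσ : IsRotInvSphereProb σ)
    (ψ : EuclideanSpace ℝ (Fin D) →ₗ[ℝ] MvPolynomial (Fin n) ℝ) (f : MvPolynomial (Fin n) ℝ) :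
    ∃ q : MvPolynomial (Fin D) ℝ, q.IsHomogeneous 2 ∧ ∀ y, peval q y = pinner σ f (ψ y ^ 2) := by
  let e : Fin D → MvPolynomial (Fin n) ℝ := fun i => ψ (EuclideanSpace.single i 1)
  refine ⟨∑ i, ∑ j, C (pinner σ f (e i * e j)) * (X i * X j), ?_, fun y => ?_⟩
  · exact IsHomogeneous.sum _ _ _ fun i _ => IsHomogeneous.sum _ _ _ fun j _ =>
      ((isHomogeneous_X ℝ i).mul (isHomogeneous_X ℝ j)).C_mul _
  · have hy : y = ∑ j, y j • EuclideanSpace.single j (1 : ℝ) := by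
      simpa using ((EuclideanSpace.basisFun (Fin D) ℝ).sum_repr y).symm
    have hψ : ψ y = ∑ j, y j • e j := by
      conv_lhs => rw [hy]
      simp [map_sum, e]
    have hint : ∀ i j, Integrable (fun x => y i * y j * (peval f x * peval (e i * e j) x)) σ :=
      fun i j => (hσ.integrable ((continuous_peval f).mul (continuous_peval _))).const_mul _
    have h1 : ∀ x, peval f x * peval (ψ y ^ 2) x =
        ∑ i, ∑ j, y i * y j * (peval f x * peval (e i * e j) x) := by
      intro x
      simp only [hψ, peval, pow_two, map_mul, map_sum, smul_eval]
      rw [Finset.sum_mul_sum, Finset.mul_sum]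
      simp only [Finset.mul_sum]
      exact Finset.sum_congr rfl fun i _ => Finset.sum_congr rfl fun j _ => by ring
    unfold pinner
    simp only [h1]
    rw [integral_finsetSum _ fun i _ => integrable_finsetSum _ fun j _ => hint i j]
    simp only [integral_finsetSum _ fun j _ => hint _ j, integral_const_mul]
    simp only [peval, map_sum, map_mul, eval_C, eval_X]
    exact Finset.sum_congr rfl fun i _ => Finset.sum_congr rfl fun j _ => by ring

/-- Barvinok's inequality applied to the quadratic form H_f(g) = ⟨f, g²⟩ on
P_{n,k}: the sup of |H_f| on the unit sphere of P_{n,k} is bounded by a high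
L^{2D_{n,k}} norm of H_f. -/
theorem sq_norm_le_high_moment
    (n k D : ℕ) (hn : 1 ≤ n) (hk : 1 ≤ k)
    (σ : Measure (EuclideanSpace ℝ (Fin n))) (hσ : IsRotInvSphereProb σ)
    (ψ : EuclideanSpace ℝ (Fin D) →ₗ[ℝ] MvPolynomial (Fin n) ℝ)
    (hψinj : Function.Injective ψ)
    (hψrange : Set.range ψ = {g : MvPolynomial (Fin n) ℝ | g.IsHomogeneous k})
    (hψinner : ∀ y z : EuclideanSpace ℝ (Fin D), pinner σ (ψ y) (ψ z) = ⟪y, z⟫)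
    (ν : Measure (EuclideanSpace ℝ (Fin D))) (hν : IsRotInvSphereProb ν)
    (f : MvPolynomial (Fin n) ℝ) (hf : f.IsHomogeneous (2 * k)) :
    sqNorm k σ f ≤
      2 * Real.sqrt 3 *
        (∫ y, (pinner σ f ((ψ y) ^ 2)) ^ (2 * D) ∂ν) ^ (1 / (2 * (D : ℝ))) := by
  have hD : D ≠ 0 := by
    rintro rfl
    have := hν.1
    obtain ⟨x, hx⟩ := hν.ae_norm.exists
    simp [Subsingleton.elim x 0] at hx
  obtain ⟨q, hq, hqy⟩ := exists_quadratic hσ ψ f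
  set I : ℝ := ∫ y, (pinner σ f ((ψ y) ^ 2)) ^ (2 * D) ∂ν with hI
  have hI0 : 0 ≤ I := integral_nonneg fun y => (even_two_mul D).pow_nonneg _
  have hexp : (1 / (2 * (D : ℝ))) = ((2 * D : ℕ) : ℝ)⁻¹ := by push_cast; rw [one_div]
  refine Real.sSup_le ?_ (by positivity)
  rintro _ ⟨g, ⟨hg, hgg⟩, rfl⟩
  obtain ⟨y, rfl⟩ : g ∈ Set.range ψ := hψrange ▸ hg
  have hy : ‖y‖ = 1 := by
    rw [hψinner, real_inner_self_eq_norm_sq] at hgg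
    exact (pow_eq_one_iff_of_nonneg (norm_nonneg y) two_ne_zero).1 hgg
  have hpow : ∀ x, peval (q ^ D) x = pinner σ f (ψ x ^ 2) ^ D := by
    intro x
    rw [← hqy]
    simp [peval]
  have key := sq_peval_le hν (hq.pow D) hy
  simp only [hpow] at key
  -- The constant: `12 ^ D = (2√3) ^ (2D)`, so both sides are compared as `2D`-th powers.
  refine le_of_pow_le_pow_left₀ (n := 2 * D) (by omega) (by positivity) ?_
  rw [mul_pow, hexp, Real.rpow_inv_natCast_pow hI0 (by omega), (even_two_mul D).pow_abs]
  have h12 : (2 * Real.sqrt 3) ^ (2 * D) = 12 ^ D := by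
    rw [pow_mul, mul_pow, Real.sq_sqrt (by norm_num)]; norm_num
  rw [h12, hI]
  calc _ = (pinner σ f (ψ y ^ 2) ^ D) ^ 2 := by ring
    _ ≤ _ := key
    _ = _ := by
      congr 2
      ext x
      ring

end
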